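/- For a finite connected weighted graph G = (V, c) and disjoint nonempty A, B ⊆ V, the effective resistance is given by the flow characterization R(A,B) = inf{E(J) : J is a unit flow from A to B}, where E(J) is the energy dissipation. -/

import Mathlib

/-! The potential `f` minimizing the energy with `f = 0` on `A` and `f = 1` on `B` is harmonic
off `A ∪ B`, so its gradient is a flow from `A` to `B`. Summation by parts
(`half_sum_mul_sub_eq_flux`) says that pairing any flow `J` with the differences of any potential
`g` with these boundary values gives the flux of `J`. Hence, with `E = E(f) > 0`:

* taking `J = ∇f` gives `flux ∇f = E` and, expanding `0 ≤ E(g - f)`, also `E ≤ E(g)` for every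
  admissible `g`, so the infimum of the energies is `E`;
* pairing a unit flow `J` with `f` gives `1`, and expanding `0 ≤ E(J - E⁻¹ ∇f)` gives
  `E⁻¹ ≤ E(J)`, with equality for the unit flow `E⁻¹ ∇f`.

The harmonic potential exists because the Dirichlet problem is a square linear system whose kernel
is trivial: a potential in the kernel has zero energy, hence is constant by connectedness, hence
vanishes. -/

noncomputable section

namespace WeightedGraph

attribute [local instance] Classical.propDecidable

variable {V : Type}

/-- The energy `E(f) = (1/2) ∑_{p,q} c p q (f p - f q)^2` of a potential `f`
on a finite weighted graph with conductances `c`. -/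
def energy [Fintype V] (c : V → V → ℝ) (f : V → ℝ) : ℝ :=
  (1 / 2) * ∑ p : V, ∑ q : V, c p q * (f p - f q) ^ 2

/-- The effective resistance `R(A,B) = (inf {E(f) : f ≡ 0 on A, f ≡ 1 on B})⁻¹`. -/
def effRes [Fintype V] (c : V → V → ℝ) (A B : Set V) : ℝ :=
  (sInf {e : ℝ | ∃ f : V → ℝ, (∀ p ∈ A, f p = 0) ∧ (∀ p ∈ B, f p = 1) ∧ e = energy c f})⁻¹

/-- The discrete gradient `∇f (p,q) = c p q * (f p - f q)`. -/
def grad (c : V → V → ℝ) (f : V → ℝ) : V → V → ℝ := fun p q => c p q * (f p - f q)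

/-- The weighted graph Laplacian `Δf (p) = -∑_q c p q (f p - f q)`. -/
def lap [Fintype V] (c : V → V → ℝ) (f : V → ℝ) : V → ℝ :=
  fun p => -∑ q : V, c p q * (f p - f q)

/-- The energy-dissipation pairing
`E(J,K) = (1/2) ∑_{c p q > 0} J p q * K p q / c p q` of edge functions. -/
def dissip [Fintype V] (c : V → V → ℝ) (J K : V → V → ℝ) : ℝ :=
  (1 / 2) * ∑ p : V, ∑ q : V, if 0 < c p q then J p q * K p q / c p q else 0

/-- The divergence `div J (p) = -∑_q J p q` of an edge function. -/
def divg [Fintype V] (J : V → V → ℝ) : V → ℝ := fun p => -∑ q : V, J p q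

/-- `J` is a flow from `A` to `B`: it is antisymmetric, vanishes off the edge
set, and has vanishing divergence outside `A ∪ B`. -/
def IsFlow [Fintype V] (c : V → V → ℝ) (A B : Set V) (J : V → V → ℝ) : Prop :=
  (∀ p q, J p q = -J q p) ∧ (∀ p q, ¬ 0 < c p q → J p q = 0) ∧
    ∀ p, p ∉ A ∪ B → divg J p = 0

/-- The flux of an edge function out of a set `A`: `∑_{p ∈ A} div J (p)`. -/
def flux [Fintype V] (A : Set V) (J : V → V → ℝ) : ℝ :=
  ∑ p : V, if p ∈ A then divg J p else 0

/-- A unit flow from `A` to `B` is a flow of flux `1`. -/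
def IsUnitFlow [Fintype V] (c : V → V → ℝ) (A B : Set V) (J : V → V → ℝ) : Prop :=
  IsFlow c A B J ∧ flux A J = 1

/-- The graph is connected: any two vertices are joined by a path of edges. -/
def IsConnected (c : V → V → ℝ) : Prop :=
  ∀ p q : V, Relation.ReflTransGen (fun a b => 0 < c a b) p q


/-- Summation by parts for an antisymmetric edge function. -/
lemma half_sum_mul_sub [Fintype V] (J : V → V → ℝ) (hJ : ∀ p q, J p q = -J q p) (g : V → ℝ) :
    (1 / 2) * ∑ p, ∑ q, J p q * (g p - g q) = -∑ p, divg J p * g p := by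
  have h1 : ∑ p, ∑ q, J p q * g q = -∑ p, ∑ q, J p q * g p := by
    rw [Finset.sum_comm, ← Finset.sum_neg_distrib]
    refine Finset.sum_congr rfl fun p _ => ?_
    rw [← Finset.sum_neg_distrib]
    refine Finset.sum_congr rfl fun q _ => ?_
    rw [hJ q p]; ring
  have h2 : ∑ p, divg J p * g p = -∑ p, ∑ q, J p q * g p := by
    rw [← Finset.sum_neg_distrib]
    refine Finset.sum_congr rfl fun p _ => ?_
    rw [divg, neg_mul, Finset.sum_mul]
  simp only [mul_sub, Finset.sum_sub_distrib]
  rw [h1, h2]; ring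

lemma sum_divg [Fintype V] (J : V → V → ℝ) (hJ : ∀ p q, J p q = -J q p) :
    ∑ p, divg J p = 0 := by
  have h := half_sum_mul_sub J hJ fun _ => 1
  simp only [sub_self, mul_zero, Finset.sum_const_zero, mul_one] at h
  linarith

/-- A flow paired with a potential that is `0` on `A` and `1` on `B` gives the flux of the flow. -/
lemma half_sum_mul_sub_eq_flux [Fintype V] {c : V → V → ℝ} {A B : Set V}
    {J : V → V → ℝ} (hJ : IsFlow c A B J) {g : V → ℝ}
    (hgA : ∀ p ∈ A, g p = 0) (hgB : ∀ p ∈ B, g p = 1) :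
    (1 / 2) * ∑ p, ∑ q, J p q * (g p - g q) = flux A J := by
  rw [half_sum_mul_sub J hJ.1, flux]
  -- Pointwise `div J * g + 1_A * div J = div J`, and the total divergence vanishes.
  have h : ∑ p, (divg J p * g p + if p ∈ A then divg J p else 0) = ∑ p, divg J p := by
    refine Finset.sum_congr rfl fun p _ => ?_
    by_cases hpA : p ∈ A
    · simp [hpA, hgA p hpA]
    · by_cases hpB : p ∈ B
      · simp [hpA, hgB p hpB]
      · simp [hpA, hJ.2.2 p (by simp [hpA, hpB])]
  rw [sum_divg J hJ.1, Finset.sum_add_distrib] at h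
  linarith

lemma grad_antisymm {c : V → V → ℝ} (hsymm : ∀ p q, c p q = c q p) (f : V → ℝ) (p q : V) :
    grad c f p q = -grad c f q p := by
  simp only [grad]; rw [hsymm p q]; ring

lemma energy_eq_half_sum_grad [Fintype V] (c : V → V → ℝ) (f : V → ℝ) :
    energy c f = (1 / 2) * ∑ p, ∑ q, grad c f p q * (f p - f q) := by
  simp only [energy, grad, sq, mul_assoc]

lemma energy_nonneg [Fintype V] {c : V → V → ℝ} (hnonneg : ∀ p q, 0 ≤ c p q) (f : V → ℝ) :
    0 ≤ energy c f :=
  mul_nonneg (by norm_num) <| Finset.sum_nonneg fun p _ => Finset.sum_nonneg fun q _ =>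
    mul_nonneg (hnonneg p q) (sq_nonneg _)

lemma eq_of_energy_eq_zero [Fintype V] {c : V → V → ℝ} (hnonneg : ∀ p q, 0 ≤ c p q)
    (hconn : IsConnected c) {f : V → ℝ} (hf : energy c f = 0) (p q : V) : f p = f q := by
  have hnn : ∀ p q, 0 ≤ c p q * (f p - f q) ^ 2 := fun p q =>
    mul_nonneg (hnonneg p q) (sq_nonneg _)
  have hsum : ∑ p, ∑ q, c p q * (f p - f q) ^ 2 = 0 := by
    simpa [energy] using hf
  have hedge : ∀ a b, 0 < c a b → f a = f b := by
    intro a b hab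
    have h1 := (Finset.sum_eq_zero_iff_of_nonneg
      (fun p _ => Finset.sum_nonneg fun q _ => hnn p q)).1 hsum a (Finset.mem_univ _)
    have h2 := (Finset.sum_eq_zero_iff_of_nonneg (fun q _ => hnn a q)).1 h1 b (Finset.mem_univ _)
    have h3 : (f a - f b) ^ 2 = 0 := (mul_eq_zero.1 h2).resolve_left hab.ne'
    exact sub_eq_zero.1 (pow_eq_zero_iff two_ne_zero |>.1 h3)
  induction hconn p q with
  | refl => rfl
  | tail _ hbc ih => exact ih.trans (hedge _ _ hbc)

/-- The operator of the Dirichlet problem with boundary `S`: evaluation on `S`, and the divergence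
of the gradient off `S`. -/
def dirichletMap [Fintype V] (c : V → V → ℝ) (S : Set V) : (V → ℝ) →ₗ[ℝ] (V → ℝ) where
  toFun f p := if p ∈ S then f p else divg (grad c f) p
  map_add' f g := by
    funext p
    by_cases hp : p ∈ S
    · simp [hp]
    · simp only [hp, if_false, divg, grad, Pi.add_apply]
      rw [← neg_add, ← Finset.sum_add_distrib]
      exact congrArg _ (Finset.sum_congr rfl fun q _ => by ring)
  map_smul' r f := by
    funext p
    by_cases hp : p ∈ S
    · simp [hp]
    · simp only [hp, if_false, divg, grad, Pi.smul_apply, smul_eq_mul, RingHom.id_apply]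
      rw [mul_neg, Finset.mul_sum]
      exact congrArg _ (Finset.sum_congr rfl fun q _ => by ring)

lemma dirichletMap_apply [Fintype V] (c : V → V → ℝ) (S : Set V) (f : V → ℝ) (p : V) :
    dirichletMap c S f p = if p ∈ S then f p else divg (grad c f) p := rfl

lemma dirichletMap_surjective [Fintype V] {c : V → V → ℝ}
    (hsymm : ∀ p q, c p q = c q p) (hnonneg : ∀ p q, 0 ≤ c p q) (hconn : IsConnected c)
    {S : Set V} (hS : S.Nonempty) : Function.Surjective (dirichletMap c S) := by
  rw [← LinearMap.injective_iff_surjective, injective_iff_map_eq_zero]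
  intro f hf
  have hp : ∀ p, (if p ∈ S then f p else divg (grad c f) p) = 0 := fun p => congrFun hf p
  have hE : energy c f = 0 := by
    rw [energy_eq_half_sum_grad, half_sum_mul_sub _ (grad_antisymm hsymm f), neg_eq_zero]
    refine Finset.sum_eq_zero fun p _ => ?_
    have h := hp p
    by_cases hpS : p ∈ S
    · rw [if_pos hpS] at h; simp [h]
    · rw [if_neg hpS] at h; simp [h]
  obtain ⟨s, hs⟩ := hS
  funext p
  have h := hp s
  rw [if_pos hs] at h
  rw [eq_of_energy_eq_zero hnonneg hconn hE p s, h, Pi.zero_apply]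

/-- The Dirichlet problem with values `0` on `A` and `1` on `B` is solvable, and the gradient of the
solution is a flow from `A` to `B`. -/
lemma exists_harmonic [Fintype V] {c : V → V → ℝ}
    (hsymm : ∀ p q, c p q = c q p) (hnonneg : ∀ p q, 0 ≤ c p q) (hconn : IsConnected c)
    {A B : Set V} (hA : A.Nonempty) (hAB : Disjoint A B) :
    ∃ f : V → ℝ, (∀ p ∈ A, f p = 0) ∧ (∀ p ∈ B, f p = 1) ∧ IsFlow c A B (grad c f) := by
  obtain ⟨f, hf⟩ := dirichletMap_surjective hsymm hnonneg hconn (hA.inl : (A ∪ B).Nonempty)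
    fun p => if p ∈ B then 1 else 0
  refine ⟨f, fun p hpA => ?_, fun p hpB => ?_, grad_antisymm hsymm f, fun p q hpq => ?_,
    fun p hpS => ?_⟩
  · have h := congrFun hf p
    rw [dirichletMap_apply] at h
    rwa [if_pos (show p ∈ A ∪ B from Or.inl hpA), if_neg (Set.disjoint_left.1 hAB hpA)] at h
  · have h := congrFun hf p
    rw [dirichletMap_apply] at h
    rwa [if_pos (show p ∈ A ∪ B from Or.inr hpB), if_pos hpB] at h
  · rw [grad, le_antisymm (not_lt.1 hpq) (hnonneg p q), zero_mul]
  · have h := congrFun hf p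
    rw [dirichletMap_apply] at h
    rwa [if_neg hpS, if_neg fun hpB => hpS (Or.inr hpB)] at h

/-- Dirichlet's principle: among the potentials that are `0` on `A` and `1` on `B`, one whose
gradient is a flow from `A` to `B` minimizes the energy. -/
lemma energy_le_of_isFlow_grad [Fintype V] {c : V → V → ℝ} (hnonneg : ∀ p q, 0 ≤ c p q)
    {A B : Set V} {f g : V → ℝ}
    (hfA : ∀ p ∈ A, f p = 0) (hfB : ∀ p ∈ B, f p = 1) (hf : IsFlow c A B (grad c f))
    (hgA : ∀ p ∈ A, g p = 0) (hgB : ∀ p ∈ B, g p = 1) : energy c f ≤ energy c g := by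
  have h1 := half_sum_mul_sub_eq_flux hf hfA hfB
  have h2 := half_sum_mul_sub_eq_flux hf hgA hgB
  rw [← energy_eq_half_sum_grad] at h1
  have h3 : energy c (g - f) = energy c g
      - 2 * ((1 / 2) * ∑ p, ∑ q, grad c f p q * (g p - g q)) + energy c f := by
    simp only [energy, grad, Finset.mul_sum, ← Finset.sum_sub_distrib, ← Finset.sum_add_distrib]
    refine Finset.sum_congr rfl fun p _ => Finset.sum_congr rfl fun q _ => ?_
    simp only [Pi.sub_apply]; ring
  have h4 := energy_nonneg hnonneg (g - f)
  linarith

/-- The expansion of `0 ≤ E(J - s ∇f)`. -/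
lemma le_dissip [Fintype V] {c : V → V → ℝ} (hnonneg : ∀ p q, 0 ≤ c p q)
    {J : V → V → ℝ} (hJ : ∀ p q, ¬ 0 < c p q → J p q = 0) (f : V → ℝ) (s : ℝ) :
    2 * s * ((1 / 2) * ∑ p, ∑ q, J p q * (f p - f q)) - s ^ 2 * energy c f ≤ dissip c J J := by
  simp only [energy, dissip, Finset.mul_sum, ← Finset.sum_sub_distrib]
  refine Finset.sum_le_sum fun p _ => Finset.sum_le_sum fun q _ => ?_
  split_ifs with h
  · have h0 : 0 ≤ (J p q - s * (c p q * (f p - f q))) ^ 2 / c p q := by positivity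
    have h1 : (J p q - s * (c p q * (f p - f q))) ^ 2 / c p q
        = J p q * J p q / c p q - 2 * s * (J p q * (f p - f q))
          + s ^ 2 * (c p q * (f p - f q) ^ 2) := by
      field_simp; ring
    linarith
  · simp [hJ p q h, le_antisymm (not_lt.1 h) (hnonneg p q)]

lemma dissip_smul_grad [Fintype V] {c : V → V → ℝ} (hnonneg : ∀ p q, 0 ≤ c p q) (f : V → ℝ)
    (s : ℝ) : dissip c (fun p q => s * grad c f p q) (fun p q => s * grad c f p q)
      = s ^ 2 * energy c f := by
  simp only [energy, dissip, grad, Finset.mul_sum]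
  refine Finset.sum_congr rfl fun p _ => Finset.sum_congr rfl fun q _ => ?_
  split_ifs with h
  · field_simp
  · simp [le_antisymm (not_lt.1 h) (hnonneg p q)]

lemma divg_smul [Fintype V] (J : V → V → ℝ) (s : ℝ) (p : V) :
    divg (fun p q => s * J p q) p = s * divg J p := by
  simp only [divg, mul_neg, Finset.mul_sum]

lemma IsFlow.smul [Fintype V] {c : V → V → ℝ} {A B : Set V} {J : V → V → ℝ}
    (hJ : IsFlow c A B J) (s : ℝ) : IsFlow c A B fun p q => s * J p q :=
  ⟨fun p q => by beta_reduce; rw [hJ.1 p q]; ring,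
    fun p q h => by beta_reduce; rw [hJ.2.1 p q h, mul_zero],
    fun p h => by rw [divg_smul, hJ.2.2 p h, mul_zero]⟩

lemma flux_smul [Fintype V] (A : Set V) (J : V → V → ℝ) (s : ℝ) :
    flux A (fun p q => s * J p q) = s * flux A J := by
  simp only [flux, divg_smul, Finset.mul_sum, mul_ite, mul_zero]

/-- The flow characterization of the effective resistance:
`R(A,B) = inf {E(J) : J is a unit flow from A to B}`. -/
theorem effRes_eq_inf_flow_dissipation [Fintype V] (c : V → V → ℝ)
    (hsymm : ∀ p q, c p q = c q p) (hnonneg : ∀ p q, 0 ≤ c p q)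
    (hdiag : ∀ p, c p p = 0) (hconn : IsConnected c)
    (A B : Set V) (hA : A.Nonempty) (hB : B.Nonempty) (hAB : Disjoint A B) :
    effRes c A B = sInf {e : ℝ | ∃ J : V → V → ℝ, IsUnitFlow c A B J ∧ e = dissip c J J} := by
  obtain ⟨f, hfA, hfB, hf⟩ := exists_harmonic hsymm hnonneg hconn hA hAB
  have hflux : energy c f = flux A (grad c f) := by
    rw [energy_eq_half_sum_grad, half_sum_mul_sub_eq_flux hf hfA hfB]
  have hpos : 0 < energy c f := by
    refine (energy_nonneg hnonneg f).lt_of_ne' fun h0 => ?_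
    obtain ⟨a, ha⟩ := hA
    obtain ⟨b, hb⟩ := hB
    have h := eq_of_energy_eq_zero hnonneg hconn h0 a b
    rw [hfA a ha, hfB b hb] at h
    exact zero_ne_one h
  have hmin : IsLeast {e : ℝ | ∃ g : V → ℝ, (∀ p ∈ A, g p = 0) ∧ (∀ p ∈ B, g p = 1) ∧
      e = energy c g} (energy c f) := by
    refine ⟨⟨f, hfA, hfB, rfl⟩, ?_⟩
    rintro _ ⟨g, hgA, hgB, rfl⟩
    exact energy_le_of_isFlow_grad hnonneg hfA hfB hf hgA hgB
  have hmin' : IsLeast {e : ℝ | ∃ J : V → V → ℝ, IsUnitFlow c A B J ∧ e = dissip c J J}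
      (energy c f)⁻¹ := by
    refine ⟨⟨fun p q => (energy c f)⁻¹ * grad c f p q, ⟨hf.smul _, ?_⟩, ?_⟩, ?_⟩
    · rw [flux_smul, ← hflux, inv_mul_cancel₀ hpos.ne']
    · rw [dissip_smul_grad hnonneg]
      field_simp
    · rintro _ ⟨J, ⟨hJ, hJ1⟩, rfl⟩
      have h := le_dissip hnonneg hJ.2.1 f (energy c f)⁻¹
      rw [half_sum_mul_sub_eq_flux hJ hfA hfB, hJ1] at h
      have h2 : (energy c f)⁻¹ ^ 2 * energy c f = (energy c f)⁻¹ := by field_simp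
      linarith
  rw [effRes, hmin.csInf_eq, hmin'.csInf_eq]

end WeightedGraph
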